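/- Let A be a nonempty finite set, let ε' ∈ [0, 1), and let G ⊆ A be nonempty with |G| = (1 − ε')·|A|. Let U be uniformly distributed on A and let Û be uniformly distributed on G. Then for every function g from A to a finite set Y and every function h from A to a finite set T, I(h(U); g(U)) ≤ I(h(Û); g(Û)) + ε'·log|A| − log(1 − ε') + (ε'/(1 − ε'))·(log e + log|Y|), where I denotes mutual information with logarithms to base 2. -/

import Mathlib

/-- `nml2 x = -x * log₂ x`, the summand of base-2 Shannon entropy
(with the convention `0 · log 0 = 0`). -/
noncomputable def nml2 (x : ℝ) : ℝ := -x * Real.logb 2 x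

open Classical in
/-- Base-2 Shannon entropy of the random variable `X` defined on the finite
probability space `Ω` with probability mass function `p`. -/
noncomputable def entropy {Ω S : Type*} [Fintype Ω] [Fintype S]
    (p : Ω → ℝ) (X : Ω → S) : ℝ :=
  ∑ s : S, nml2 (∑ ω : Ω, if X ω = s then p ω else 0)

/-- Conditional Shannon entropy `H(X | Y)` (base 2). -/
noncomputable def condEntropy {Ω S T : Type*} [Fintype Ω] [Fintype S] [Fintype T]
    (p : Ω → ℝ) (X : Ω → S) (Y : Ω → T) : ℝ :=
  entropy p (fun ω => (X ω, Y ω)) - entropy p Y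

/-- Mutual information `I(X; Y)` (base 2). -/
noncomputable def mutualInfo {Ω S T : Type*} [Fintype Ω] [Fintype S] [Fintype T]
    (p : Ω → ℝ) (X : Ω → S) (Y : Ω → T) : ℝ :=
  entropy p X + entropy p Y - entropy p (fun ω => (X ω, Y ω))

/-- Conditional mutual information `I(X; Y | Z)` (base 2). -/
noncomputable def condMutualInfo {Ω S T W : Type*} [Fintype Ω] [Fintype S] [Fintype T]
    [Fintype W] (p : Ω → ℝ) (X : Ω → S) (Y : Ω → T) (Z : Ω → W) : ℝ :=
  entropy p (fun ω => (X ω, Z ω)) + entropy p (fun ω => (Y ω, Z ω))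
    - entropy p (fun ω => ((X ω, Y ω), Z ω)) - entropy p Z

/-!
Entropy and mutual information make sense for an unnormalised nonnegative weight `p`. As `H(X)` is
subadditive and `H(X | Y)` superadditive in `p` (the log-sum inequality), the mutual information
`I(X; Y) = H(X) - H(X | Y)` is subadditive. Split `p` into its parts on `G` and off `G`. The part on
`G` is `P(G)` times the conditional distribution, and rescaling by `P(G) ≤ 1` costs at most
`-log P(G)` because mutual information is nonnegative. The part off `G` contributes at most
`∑ a ∉ G, -p a * log (p a)`, which is `ε' log |A|` for the uniform distribution.
-/

section Concavity

/-- For `f = negMulLog` this is the log-sum inequality. -/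
theorem sum_mul_div_le_of_concaveOn {ι : Type*} {s : Finset ι} {C : Set ℝ} {f : ℝ → ℝ}
    {a b : ι → ℝ} (hf : ConcaveOn ℝ C f) (hb : ∀ i ∈ s, 0 ≤ b i)
    (hab : ∀ i ∈ s, b i = 0 → a i = 0) (hC : ∀ i ∈ s, a i / b i ∈ C) :
    ∑ i ∈ s, b i * f (a i / b i) ≤ (∑ i ∈ s, b i) * f ((∑ i ∈ s, a i) / ∑ i ∈ s, b i) := by
  rcases (Finset.sum_nonneg hb).eq_or_lt with hB | hB
  · have hb0 := (Finset.sum_eq_zero_iff_of_nonneg hb).1 hB.symm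
    rw [← hB, zero_mul]
    exact (Finset.sum_eq_zero fun i hi => by rw [hb0 i hi, zero_mul]).le
  · have hcancel : ∑ i ∈ s, b i * (a i / b i) = ∑ i ∈ s, a i :=
      Finset.sum_congr rfl fun i hi => mul_div_cancel_of_imp' (hab i hi)
    have jensen := hf.le_map_centerMass hb hB hC
    simp only [Finset.centerMass, smul_eq_mul, Function.comp_apply, hcancel] at jensen
    rwa [inv_mul_le_iff₀ hB, inv_mul_eq_div] at jensen

theorem nml2_eq_negMulLog_div (x : ℝ) : nml2 x = Real.negMulLog x / Real.log 2 :=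
  (mul_div_assoc _ _ _).symm

theorem nml2_mul (x y : ℝ) : nml2 (x * y) = y * nml2 x + x * nml2 y := by
  simp only [nml2_eq_negMulLog_div, Real.negMulLog_mul]
  ring

theorem mul_nml2_div {a b : ℝ} (hab : b = 0 → a = 0) :
    b * nml2 (a / b) = nml2 a + a * Real.logb 2 b := by
  rcases eq_or_ne b 0 with rfl | hb
  · simp [hab rfl, nml2]
  · rw [div_eq_mul_inv, nml2_mul, nml2, nml2, Real.logb_inv]
    field_simp

theorem concaveOn_nml2 : ConcaveOn ℝ (Set.Ici 0) nml2 := by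
  have h := Real.concaveOn_negMulLog.smul (inv_nonneg.2 (Real.log_nonneg one_le_two))
  refine h.congr fun x _ => ?_
  simp only [nml2_eq_negMulLog_div, smul_eq_mul, inv_mul_eq_div]

theorem nml2_add_le {x y : ℝ} (hx : 0 ≤ x) (hy : 0 ≤ y) : nml2 (x + y) ≤ nml2 x + nml2 y := by
  have hmono : ∀ {u v : ℝ}, 0 ≤ u → u ≤ v → u * Real.logb 2 u ≤ u * Real.logb 2 v := by
    intro u v hu huv
    rcases hu.eq_or_lt with rfl | hu
    · simp
    · gcongr
      exact one_lt_two
  have h₁ := hmono hx (le_add_of_nonneg_right hy)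
  have h₂ := hmono hy (le_add_of_nonneg_left hx)
  simp only [nml2]
  linarith

theorem nml2_sum_le {ι : Type*} {s : Finset ι} {x : ι → ℝ} (hx : ∀ i ∈ s, 0 ≤ x i) :
    nml2 (∑ i ∈ s, x i) ≤ ∑ i ∈ s, nml2 (x i) :=
  Finset.le_sum_of_subadditive_on_pred nml2 (0 ≤ ·) (by simp [nml2])
    (fun _ _ => nml2_add_le) (fun _ _ => add_nonneg) x hx

theorem mul_nml2_div_add_le {a₁ a₂ b₁ b₂ : ℝ} (ha₁ : 0 ≤ a₁) (ha₂ : 0 ≤ a₂) (hab₁ : a₁ ≤ b₁)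
    (hab₂ : a₂ ≤ b₂) :
    b₁ * nml2 (a₁ / b₁) + b₂ * nml2 (a₂ / b₂) ≤ (b₁ + b₂) * nml2 ((a₁ + a₂) / (b₁ + b₂)) := by
  have hb₁ := ha₁.trans hab₁
  have hb₂ := ha₂.trans hab₂
  simpa using sum_mul_div_le_of_concaveOn (s := Finset.univ) (a := ![a₁, a₂]) (b := ![b₁, b₂])
    concaveOn_nml2 (by simp [hb₁, hb₂])
    (by simpa using ⟨fun h => by linarith, fun h => by linarith⟩)
    (by simpa using ⟨div_nonneg ha₁ hb₁, div_nonneg ha₂ hb₂⟩)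

end Concavity

open Classical in
/-- The law of `X` under the weight `p`: the value at `s` is the weight of the fibre `X = s`,
written with the summand that `entropy` uses. -/
noncomputable def law {Ω S : Type*} [Fintype Ω] (p : Ω → ℝ) (X : Ω → S) (s : S) : ℝ :=
  ∑ ω : Ω, if X ω = s then p ω else 0

section Law

variable {Ω S T : Type*} [Fintype Ω]

open Classical in
theorem law_nonneg {p : Ω → ℝ} (hp : 0 ≤ p) (X : Ω → S) (s : S) : 0 ≤ law p X s :=
  Finset.sum_nonneg fun ω _ => ite_nonneg (hp ω) le_rfl

theorem law_add (p q : Ω → ℝ) (X : Ω → S) (s : S) : law (p + q) X s = law p X s + law q X s := by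
  simp only [law, Pi.add_apply, ← Finset.sum_add_distrib, ← ite_add_zero]

theorem law_smul (c : ℝ) (p : Ω → ℝ) (X : Ω → S) (s : S) : law (c • p) X s = c * law p X s := by
  simp only [law, Pi.smul_apply, smul_eq_mul, Finset.mul_sum, mul_ite, mul_zero]

theorem law_id (p : Ω → ℝ) (ω : Ω) : law p id ω = p ω := by
  classical
  simp [law]

theorem sum_law [Fintype S] (p : Ω → ℝ) (X : Ω → S) : ∑ s, law p X s = ∑ ω, p ω := by
  classical
  simp only [law]
  rw [Finset.sum_comm]
  simp

open Classical in
theorem law_comp [Fintype S] (p : Ω → ℝ) (X : Ω → S) (f : S → T) (t : T) :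
    law p (f ∘ X) t = ∑ s with f s = t, law p X s := by
  simp only [law]
  rw [Finset.sum_comm]
  simp

theorem law_eq_sum_left [Fintype S] (p : Ω → ℝ) (X : Ω → S) (Y : Ω → T) (t : T) :
    law p Y t = ∑ s, law p (fun ω => (X ω, Y ω)) (s, t) := by
  classical
  simp only [law, Prod.mk.injEq, ite_and]
  rw [Finset.sum_comm]
  simp

theorem law_eq_sum_right [Fintype T] (p : Ω → ℝ) (X : Ω → S) (Y : Ω → T) (s : S) :
    law p X s = ∑ t, law p (fun ω => (X ω, Y ω)) (s, t) := by
  classical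
  simp only [law, Prod.mk.injEq, and_comm (a := X _ = s), ite_and]
  rw [Finset.sum_comm]
  simp

theorem law_prod_le_law_snd {p : Ω → ℝ} (hp : 0 ≤ p) (X : Ω → S) (Y : Ω → T) (s : S) (t : T) :
    law p (fun ω => (X ω, Y ω)) (s, t) ≤ law p Y t := by
  refine Finset.sum_le_sum fun ω _ => ?_
  have hω : 0 ≤ p ω := hp ω
  grind

theorem law_prod_eq_zero {p : Ω → ℝ} (hp : 0 ≤ p) (X : Ω → S) (Y : Ω → T) (s : S) (t : T)
    (h : law p Y t = 0) : law p (fun ω => (X ω, Y ω)) (s, t) = 0 :=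
  ((law_prod_le_law_snd hp X Y s t).trans_eq h).antisymm (law_nonneg hp _ _)

end Law

section Entropy

variable {Ω S T : Type*} [Fintype Ω] [Fintype S]

theorem entropy_eq_sum_law (p : Ω → ℝ) (X : Ω → S) : entropy p X = ∑ s, nml2 (law p X s) :=
  rfl

theorem entropy_add_le {p q : Ω → ℝ} (hp : 0 ≤ p) (hq : 0 ≤ q) (X : Ω → S) :
    entropy (p + q) X ≤ entropy p X + entropy q X := by
  simp only [entropy_eq_sum_law, ← Finset.sum_add_distrib, law_add]
  gcongr with s
  exact nml2_add_le (law_nonneg hp X s) (law_nonneg hq X s)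

theorem entropy_smul (c : ℝ) (p : Ω → ℝ) (X : Ω → S) :
    entropy (c • p) X = c * entropy p X + nml2 c * ∑ ω, p ω := by
  simp only [entropy_eq_sum_law, law_smul, nml2_mul, Finset.sum_add_distrib, ← sum_law p X,
    Finset.mul_sum]
  simp only [mul_comm, add_comm]

theorem entropy_comp_le [Fintype T] {p : Ω → ℝ} (hp : 0 ≤ p) (X : Ω → S) (f : S → T) :
    entropy p (f ∘ X) ≤ entropy p X := by
  classical
  calc entropy p (f ∘ X) = ∑ t, nml2 (∑ s with f s = t, law p X s) := by
        simp only [entropy_eq_sum_law, law_comp]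
    _ ≤ ∑ t, ∑ s with f s = t, nml2 (law p X s) := by
        gcongr with t
        exact nml2_sum_le fun s _ => law_nonneg hp X s
    _ = entropy p X := Finset.sum_fiberwise _ _ _

theorem entropy_le_sum_nml2 {p : Ω → ℝ} (hp : 0 ≤ p) (X : Ω → S) :
    entropy p X ≤ ∑ ω, nml2 (p ω) :=
  (entropy_comp_le hp id X).trans_eq (by simp only [entropy_eq_sum_law, law_id])

variable [Fintype T]

theorem condEntropy_eq_sum {p : Ω → ℝ} (hp : 0 ≤ p) (X : Ω → S) (Y : Ω → T) :
    condEntropy p X Y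
      = ∑ s, ∑ t, law p Y t * nml2 (law p (fun ω => (X ω, Y ω)) (s, t) / law p Y t) := by
  have hterm : ∀ s t, law p Y t * nml2 (law p (fun ω => (X ω, Y ω)) (s, t) / law p Y t)
      = nml2 (law p (fun ω => (X ω, Y ω)) (s, t))
        + law p (fun ω => (X ω, Y ω)) (s, t) * Real.logb 2 (law p Y t) := fun s t =>
    mul_nml2_div (law_prod_eq_zero hp X Y s t)
  have hmarginal : ∑ s, ∑ t, law p (fun ω => (X ω, Y ω)) (s, t) * Real.logb 2 (law p Y t)
      = -entropy p Y := by
    rw [Finset.sum_comm]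
    simp only [← Finset.sum_mul, ← law_eq_sum_left, entropy_eq_sum_law, nml2, neg_mul,
      Finset.sum_neg_distrib, neg_neg]
  simp only [hterm, Finset.sum_add_distrib, hmarginal]
  rw [← Fintype.sum_prod_type', condEntropy, sub_eq_add_neg, entropy_eq_sum_law]

theorem add_condEntropy_le {p q : Ω → ℝ} (hp : 0 ≤ p) (hq : 0 ≤ q) (X : Ω → S) (Y : Ω → T) :
    condEntropy p X Y + condEntropy q X Y ≤ condEntropy (p + q) X Y := by
  simp only [condEntropy_eq_sum hp, condEntropy_eq_sum hq, condEntropy_eq_sum (add_nonneg hp hq),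
    ← Finset.sum_add_distrib, law_add]
  gcongr with s _ t
  exact mul_nml2_div_add_le (law_nonneg hp _ _) (law_nonneg hq _ _)
    (law_prod_le_law_snd hp X Y s t) (law_prod_le_law_snd hq X Y s t)

theorem condEntropy_nonneg {p : Ω → ℝ} (hp : 0 ≤ p) (X : Ω → S) (Y : Ω → T) :
    0 ≤ condEntropy p X Y :=
  sub_nonneg.2 (entropy_comp_le hp (fun ω => (X ω, Y ω)) Prod.snd)

theorem condEntropy_le_entropy {p : Ω → ℝ} (hp : 0 ≤ p) (hp1 : ∑ ω, p ω = 1) (X : Ω → S)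
    (Y : Ω → T) : condEntropy p X Y ≤ entropy p X := by
  rw [condEntropy_eq_sum hp, entropy_eq_sum_law]
  gcongr with s
  have logSum := sum_mul_div_le_of_concaveOn (s := Finset.univ) (b := law p Y)
    (a := fun t => law p (fun ω => (X ω, Y ω)) (s, t)) concaveOn_nml2
    (fun t _ => law_nonneg hp Y t)
    (fun t _ => law_prod_eq_zero hp X Y s t)
    (fun t _ => div_nonneg (law_nonneg hp _ _) (law_nonneg hp Y t))
  rwa [sum_law, hp1, ← law_eq_sum_right, one_mul, div_one] at logSum

end Entropy

section MutualInfo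

variable {Ω S T : Type*} [Fintype Ω] [Fintype S] [Fintype T]

theorem mutualInfo_eq_entropy_sub_condEntropy (p : Ω → ℝ) (X : Ω → S) (Y : Ω → T) :
    mutualInfo p X Y = entropy p X - condEntropy p X Y := by
  rw [mutualInfo, condEntropy]
  ring

theorem mutualInfo_nonneg {p : Ω → ℝ} (hp : 0 ≤ p) (hp1 : ∑ ω, p ω = 1) (X : Ω → S) (Y : Ω → T) :
    0 ≤ mutualInfo p X Y := by
  rw [mutualInfo_eq_entropy_sub_condEntropy]
  exact sub_nonneg.2 (condEntropy_le_entropy hp hp1 X Y)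

theorem mutualInfo_le_sum_nml2 {p : Ω → ℝ} (hp : 0 ≤ p) (X : Ω → S) (Y : Ω → T) :
    mutualInfo p X Y ≤ ∑ ω, nml2 (p ω) := by
  rw [mutualInfo_eq_entropy_sub_condEntropy]
  exact (sub_le_self _ (condEntropy_nonneg hp X Y)).trans (entropy_le_sum_nml2 hp X)

theorem mutualInfo_add_le {p q : Ω → ℝ} (hp : 0 ≤ p) (hq : 0 ≤ q) (X : Ω → S) (Y : Ω → T) :
    mutualInfo (p + q) X Y ≤ mutualInfo p X Y + mutualInfo q X Y := by
  simp only [mutualInfo_eq_entropy_sub_condEntropy]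
  linarith [entropy_add_le hp hq X, add_condEntropy_le hp hq X Y]

theorem mutualInfo_smul (c : ℝ) (p : Ω → ℝ) (X : Ω → S) (Y : Ω → T) :
    mutualInfo (c • p) X Y = c * mutualInfo p X Y + nml2 c * ∑ ω, p ω := by
  simp only [mutualInfo, entropy_smul]
  ring

open Classical in
theorem mutualInfo_le_restrict_add {p : Ω → ℝ} (hp : 0 ≤ p) (G : Finset Ω) (X : Ω → S)
    (Y : Ω → T) :
    mutualInfo p X Y
      ≤ mutualInfo (fun ω => if ω ∈ G then p ω else 0) X Y + ∑ ω ∈ Gᶜ, nml2 (p ω) := by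
  set good : Ω → ℝ := fun ω => if ω ∈ G then p ω else 0
  set bad : Ω → ℝ := fun ω => if ω ∈ Gᶜ then p ω else 0 with hbad
  have hsplit : p = good + bad := by
    funext ω
    by_cases hω : ω ∈ G <;> simp [good, bad, hω]
  have hgood : 0 ≤ good := fun ω => ite_nonneg (hp ω) le_rfl
  have hbad0 : 0 ≤ bad := fun ω => ite_nonneg (hp ω) le_rfl
  have hsum : ∑ ω, nml2 (bad ω) = ∑ ω ∈ Gᶜ, nml2 (p ω) := by
    simp only [hbad, apply_ite nml2, show nml2 0 = 0 by simp [nml2], Finset.sum_ite_mem,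
      Finset.univ_inter]
  calc mutualInfo p X Y = mutualInfo (good + bad) X Y := by rw [← hsplit]
    _ ≤ mutualInfo good X Y + mutualInfo bad X Y := mutualInfo_add_le hgood hbad0 X Y
    _ ≤ mutualInfo good X Y + ∑ ω ∈ Gᶜ, nml2 (p ω) := by
        rw [← hsum]
        gcongr
        exact mutualInfo_le_sum_nml2 hbad0 X Y

end MutualInfo

open Classical in
theorem stmt4_general {A Y T : Type*} [Fintype A] [Fintype Y] [Fintype T] {p : A → ℝ}
    (hp : 0 ≤ p) (hp1 : ∑ a, p a = 1) (G : Finset A) (hG : 0 < ∑ a ∈ G, p a)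
    (g : A → Y) (h : A → T) :
    mutualInfo p h g
      ≤ mutualInfo (fun a => if a ∈ G then p a / ∑ b ∈ G, p b else 0) h g
          + ∑ a ∈ Gᶜ, nml2 (p a) - Real.logb 2 (∑ a ∈ G, p a) := by
  set m := ∑ a ∈ G, p a
  set cond : A → ℝ := fun a => if a ∈ G then p a / m else 0 with hcond
  have hm1 : m ≤ 1 := (Finset.sum_le_univ_sum_of_nonneg hp).trans_eq hp1
  have hrestrict : (fun a => if a ∈ G then p a else 0) = m • cond := by
    funext a
    simp only [hcond, Pi.smul_apply, smul_eq_mul, mul_ite, mul_zero, mul_div_cancel₀ _ hG.ne']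
  have hcond0 : 0 ≤ cond := fun a => ite_nonneg (div_nonneg (hp a) hG.le) le_rfl
  have hcond1 : ∑ a, cond a = 1 := by
    rw [hcond, Finset.sum_ite_mem, Finset.univ_inter, ← Finset.sum_div, div_self hG.ne']
  have hscale : mutualInfo (m • cond) h g ≤ mutualInfo cond h g - Real.logb 2 m := by
    have hI := mul_le_of_le_one_left (mutualInfo_nonneg hcond0 hcond1 h g) hm1
    have hlog := mul_le_of_le_one_left
      (neg_nonneg.2 (Real.logb_nonpos one_lt_two hG.le hm1)) hm1
    rw [mutualInfo_smul, hcond1, nml2]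
    linarith
  have hsplit := mutualInfo_le_restrict_add hp G h g
  rw [hrestrict] at hsplit
  linarith

open Classical in
theorem mutualInfo_uniform_le {A Y T : Type*} [Fintype A] [Fintype Y] [Fintype T] {G : Finset A}
    (hG : G.Nonempty) (g : A → Y) (h : A → T) :
    mutualInfo (fun _ : A => (1 : ℝ) / Fintype.card A) h g
      ≤ mutualInfo (fun a => if a ∈ G then (1 : ℝ) / G.card else 0) h g
          + (1 - (G.card : ℝ) / Fintype.card A) * Real.logb 2 (Fintype.card A)
          - Real.logb 2 ((G.card : ℝ) / Fintype.card A) := by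
  have hGpos : (0 : ℝ) < G.card := Nat.cast_pos.2 hG.card_pos
  have hApos : (0 : ℝ) < Fintype.card A := hGpos.trans_le (Nat.cast_le.2 G.card_le_univ)
  have hmass : ∑ _a ∈ G, (1 : ℝ) / Fintype.card A = G.card / Fintype.card A := by
    rw [Finset.sum_const, nsmul_eq_mul, mul_one_div]
  have hbad : ∑ _a ∈ Gᶜ, nml2 (1 / Fintype.card A)
      = (1 - (G.card : ℝ) / Fintype.card A) * Real.logb 2 (Fintype.card A) := by
    rw [Finset.sum_const, nsmul_eq_mul, Finset.card_compl, Nat.cast_sub G.card_le_univ, nml2,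
      one_div, Real.logb_inv]
    field_simp
  have hcond : (1 : ℝ) / Fintype.card A / (G.card / Fintype.card A) = 1 / G.card :=
    div_div_div_cancel_right₀ hApos.ne' _ _
  have hmain := stmt4_general (p := fun _ : A => (1 : ℝ) / Fintype.card A)
    (fun _ => by positivity) (by simp [hApos.ne']) G (hmass ▸ div_pos hGpos hApos) g h
  simpa only [hmass, hbad, hcond] using hmain

/- Lemma 1 (abstract form): with `U` uniform on `A` and `Û` uniform on a subset `G`
of relative size `1 - ε'`, for all `g : A → Y` and `h : A → T`,
`I(h(U); g(U)) ≤ I(h(Û); g(Û)) + ε'·log₂|A| - log₂(1-ε') + (ε'/(1-ε'))·(log₂ e + log₂|Y|)`. -/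
open Classical in
theorem stmt4 {A : Type*} [Fintype A] [Nonempty A]
    (ε' : ℝ) (hε0 : 0 ≤ ε') (hε1 : ε' < 1)
    (G : Finset A) (hGne : G.Nonempty)
    (hGcard : (G.card : ℝ) = (1 - ε') * (Fintype.card A : ℝ))
    {Y T : Type*} [Fintype Y] [Fintype T] (g : A → Y) (h : A → T) :
    mutualInfo (fun _ : A => (1 : ℝ) / (Fintype.card A : ℝ)) h g
      ≤ mutualInfo (fun a : A => if a ∈ G then (1 : ℝ) / (G.card : ℝ) else 0) h g
          + ε' * Real.logb 2 (Fintype.card A : ℝ) - Real.logb 2 (1 - ε')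
          + (ε' / (1 - ε')) *
              (Real.logb 2 (Real.exp 1) + Real.logb 2 (Fintype.card Y : ℝ)) := by
  have hfrac : (G.card : ℝ) / Fintype.card A = 1 - ε' :=
    (eq_div_of_mul_eq (Nat.cast_ne_zero.2 Fintype.card_ne_zero) hGcard.symm).symm
  have hslack : 0 ≤ ε' / (1 - ε') *
      (Real.logb 2 (Real.exp 1) + Real.logb 2 (Fintype.card Y : ℝ)) :=
    mul_nonneg (div_nonneg hε0 (sub_nonneg.2 hε1.le)) (add_nonneg
      (Real.logb_nonneg one_lt_two (Real.one_le_exp zero_le_one))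
      (div_nonneg (Real.log_natCast_nonneg _) (Real.log_nonneg one_le_two)))
  have hmain := mutualInfo_uniform_le hGne g h
  rw [hfrac, sub_sub_cancel] at hmain
  exact hmain.trans (le_add_of_nonneg_right hslack)
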